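/- arXiv:1310.0557 — 2 statements merged into one kernel-verified Lean document; each statement's English description precedes it below -/
import Mathlib

section
/- Let p_1, …, p_n be pairwise distinct prime numbers and let ε ∈ {-1,0,1}^n with ε not identically zero. Then ∑_{i=1}^n ε_i / p_i ≠ 0. -/
/-- For pairwise distinct primes `p 1, …, p n` and `ε ∈ {-1,0,1}^n` not
identically zero, `∑ i, ε i / p i ≠ 0`. -/
theorem signed_sum_prime_reciprocals_ne_zero (n : ℕ) (p : Fin n → ℕ)
    (hp : ∀ i, Nat.Prime (p i)) (hdist : Function.Injective p)
    (ε : Fin n → ℤ) (hε : ∀ i, ε i = -1 ∨ ε i = 0 ∨ ε i = 1) (hne : ∃ i, ε i ≠ 0) :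
    ∑ i, (ε i : ℝ) / (p i : ℝ) ≠ 0 := by
  intro h
  obtain ⟨k, hk⟩ := hne
  have hz : ∑ i, ε i * ∏ j ∈ Finset.univ.erase i, (p j : ℤ) = 0 := by
    have h2 : (∑ i, (ε i : ℝ) / (p i : ℝ)) * ∏ j, (p j : ℝ) = 0 := by rw [h, zero_mul]
    rw [Finset.sum_mul] at h2
    have h3 : ∑ i, (ε i : ℝ) * ∏ j ∈ Finset.univ.erase i, (p j : ℝ) = 0 := by
      rw [← h2]
      refine Finset.sum_congr rfl fun i _ => ?_
      have hi : (p i : ℝ) ≠ 0 := by exact_mod_cast (hp i).ne_zero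
      rw [← Finset.mul_prod_erase Finset.univ (fun j => (p j : ℝ)) (Finset.mem_univ i)]
      field_simp
    exact_mod_cast h3
  have hpk : Prime (p k : ℤ) := Nat.prime_iff_prime_int.mp (hp k)
  rw [← Finset.add_sum_erase Finset.univ _ (Finset.mem_univ k)] at hz
  have hd : (p k : ℤ) ∣ ∑ i ∈ Finset.univ.erase k, ε i * ∏ j ∈ Finset.univ.erase i, (p j : ℤ) := by
    refine Finset.dvd_sum fun i hi => Dvd.dvd.mul_left ?_ _
    exact Finset.dvd_prod_of_mem (fun j => (p j : ℤ))
      (Finset.mem_erase.mpr ⟨(Finset.ne_of_mem_erase hi).symm, Finset.mem_univ k⟩)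
  have hd2 : (p k : ℤ) ∣ ε k * ∏ j ∈ Finset.univ.erase k, (p j : ℤ) :=
    (dvd_add_left hd).mp (hz ▸ dvd_zero _)
  rcases hpk.dvd_or_dvd hd2 with h1 | h1
  · apply hpk.not_isUnit
    rcases hε k with e | e | e
    · rw [e] at h1
      exact isUnit_of_dvd_unit h1 (by simp)
    · exact absurd e hk
    · rw [e] at h1
      exact isUnit_of_dvd_one h1
  · obtain ⟨j, hj, hjd⟩ := (hpk.dvd_finsetProd_iff _).mp h1
    have := (Nat.prime_dvd_prime_iff_eq (hp k) (hp j)).mp (by exact_mod_cast hjd)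
    exact Finset.ne_of_mem_erase hj (hdist this).symm
end

section
/- Let k ≥ 1 and let f_0, f_1, …, f_T be a sequence of functions from {1,…,k} to ℕ such that f_0 is identically 0 and, for each t < T, f_{t+1} = f_t + 1_{S_t} for some subset S_t ⊆ {1,…,k} of size d with the property that every j ∈ S_t satisfies f_t(j) ≤ f_t(j') for all j' ∉ S_t. Then every value of f_T lies in {⌊Td/k⌋, ⌈Td/k⌉}. -/
/-- Starting from the all-zero degree profile on `{1,…,k}` and, for `T`
steps, incrementing the degrees of a set `S t` of exactly `d` nodes whose current degrees
do not exceed the degree of any node outside `S t`, every final degree `f T j` equals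
`⌊T*d/k⌋` or `⌈T*d/k⌉`. -/
theorem greedy_degrees_floor_ceil (k : ℕ) (hk : 1 ≤ k) (T d : ℕ)
    (f : ℕ → Fin k → ℕ) (S : ℕ → Finset (Fin k))
    (h0 : ∀ j, f 0 j = 0)
    (hcard : ∀ t < T, (S t).card = d)
    (hstep : ∀ t < T, ∀ j, f (t + 1) j = f t j + if j ∈ S t then 1 else 0)
    (hmin : ∀ t < T, ∀ j ∈ S t, ∀ j' ∉ S t, f t j ≤ f t j') :
    ∀ j, (f T j : ℤ) = ⌊((T : ℚ) * d / k : ℚ)⌋ ∨ (f T j : ℤ) = ⌈((T : ℚ) * d / k : ℚ)⌉ := by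
  have inv : ∀ t ≤ T, (∀ i j, f t i ≤ f t j + 1) ∧ ∑ i, f t i = t * d := by
    intro t
    induction t with
    | zero => intro _; simp [h0]
    | succ t ih =>
      intro ht
      obtain ⟨h1, h2⟩ := ih (by omega)
      have ht' : t < T := by omega
      refine ⟨?_, ?_⟩
      · intro i j
        rw [hstep t ht' i, hstep t ht' j]
        have a := h1 i j
        have b := hmin t ht' i
        by_cases hi : i ∈ S t <;> by_cases hj : j ∈ S t <;> simp only [hi, hj, if_true, if_false]
        · omega
        · have := b hi j hj
          omega
        · omega
        · omega
      · simp only [hstep t ht', Finset.sum_add_distrib, h2]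
        simp [hcard t ht', Nat.add_mul]
  obtain ⟨h1, h2⟩ := inv T le_rfl
  intro j
  have hlt : ∑ i, f T i < ∑ _i : Fin k, (f T j + 1) :=
    Finset.sum_lt_sum (fun i _ => h1 i j) ⟨j, Finset.mem_univ j, Nat.lt_succ_self _⟩
  have hgt : ∑ _i : Fin k, f T j < ∑ i, (f T i + 1) :=
    Finset.sum_lt_sum (fun i _ => h1 j i) ⟨j, Finset.mem_univ j, Nat.lt_succ_self _⟩
  rw [Finset.sum_add_distrib] at hgt
  simp only [h2, Finset.sum_const, Finset.card_univ, Fintype.card_fin, smul_eq_mul, mul_one]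
    at hlt hgt
  have hk' : (0 : ℚ) < k := by exact_mod_cast hk
  have hlt' : (T : ℚ) * d < k * (f T j + 1) := by exact_mod_cast hlt
  have hgt' : (k : ℚ) * f T j < T * d + k := by exact_mod_cast hgt
  have u : (T : ℚ) * d / k < f T j + 1 := by rw [div_lt_iff₀ hk']; linarith
  have l : (f T j : ℚ) - 1 < (T : ℚ) * d / k := by rw [lt_div_iff₀ hk']; linarith
  rcases le_total (f T j : ℚ) ((T : ℚ) * d / k) with h | h
  · left
    symm
    rw [Int.floor_eq_iff]
    push_cast
    exact ⟨h, u⟩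
  · right
    symm
    rw [Int.ceil_eq_iff]
    push_cast
    exact ⟨l, h⟩
end
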